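/- arXiv:1503.06252 — 3 statements merged into one kernel-verified Lean document; each statement's English description precedes it below -/
import Mathlib

section
/- Let 0 < r ≤ 2 and p ≥ 2. For every sequence t = (t_k) ∈ ℓ², the inequality √p · ‖t‖₂ + p^{1/r} · ‖t‖_p ≤ (1 + e^{(2-r)/r}) · (√p · ‖t‖₂ + p^{1/r} · ‖t‖_∞) holds, where ‖t‖_q denotes the ℓ^q norm and ‖t‖_∞ = sup_k |t_k|. -/
/-!
Write `A = ‖t‖₂`, `M = ‖t‖_∞` and `θ = 2/p ∈ (0, 1]`. The pointwise bound
`|t k| ^ p ≤ M ^ (p - 2) * |t k| ^ 2` gives the interpolation `‖t‖_p ≤ A ^ θ * M ^ (1 - θ)`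
(`lp_le_interpolation`). Consequently
`p ^ (1/r) * ‖t‖_p ≤ p ^ ((2 - r) / (r * p)) * (√p * A) ^ θ * (p ^ (1/r) * M) ^ (1 - θ)`.
The first factor is at most `e ^ ((2 - r) / r)` because `log p ≤ p`, and the remaining product is at
most `√p * A + p ^ (1/r) * M` by the weighted arithmetic-geometric mean inequality
(`mul_interpolation_le`).
-/

/-- Interpolation of the `ℓ^p` norm between `ℓ²` and `ℓ^∞`. -/
lemma lp_le_interpolation (p : ℝ) (hp : 2 ≤ p) (t : ℕ → ℝ) (ht : Memℓp t 2) :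
    (∑' k, |t k| ^ p) ^ ((1 : ℝ) / p) ≤
      ((∑' k, |t k| ^ (2 : ℝ)) ^ ((1 : ℝ) / 2)) ^ (2 / p) * (⨆ k, |t k|) ^ (1 - 2 / p) := by
  have hp0 : 0 < p := by linarith
  have hs : Summable fun k => |t k| ^ (2 : ℝ) := by
    simpa [Real.norm_eq_abs] using ht.summable (by norm_num)
  have hbdd : BddAbove (Set.range fun k => |t k|) := by
    simpa [Real.norm_eq_abs] using (ht.of_exponent_ge le_top).bddAbove
  set M := ⨆ k, |t k| with hM
  have hM0 : 0 ≤ M := Real.iSup_nonneg fun k => abs_nonneg _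
  have hpt : ∀ k, |t k| ^ p ≤ M ^ (p - 2) * |t k| ^ (2 : ℝ) := fun k => by
    have h : |t k| ^ p = |t k| ^ (p - 2) * |t k| ^ (2 : ℝ) := by
      rw [← Real.rpow_add_of_nonneg (abs_nonneg _) (by linarith) (by norm_num)]
      congr 1
      ring
    rw [h]
    exact mul_le_mul_of_nonneg_right
      (Real.rpow_le_rpow (abs_nonneg _) (le_ciSup hbdd k) (by linarith)) (by positivity)
  have hs' := hs.mul_left (M ^ (p - 2))
  have hsp : Summable fun k => |t k| ^ p :=
    Summable.of_nonneg_of_le (fun k => by positivity) hpt hs'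
  have hsum : ∑' k, |t k| ^ p ≤ M ^ (p - 2) * ∑' k, |t k| ^ (2 : ℝ) := by
    rw [← tsum_mul_left]
    exact hsp.tsum_le_tsum hpt hs'
  have hS0 : 0 ≤ ∑' k, |t k| ^ (2 : ℝ) := tsum_nonneg fun k => by positivity
  have hSp0 : 0 ≤ ∑' k, |t k| ^ p := tsum_nonneg fun k => by positivity
  calc (∑' k, |t k| ^ p) ^ ((1 : ℝ) / p)
      ≤ (M ^ (p - 2) * ∑' k, |t k| ^ (2 : ℝ)) ^ ((1 : ℝ) / p) :=
        Real.rpow_le_rpow hSp0 hsum (by positivity)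
    _ = _ := by
        rw [Real.mul_rpow (by positivity) hS0, ← Real.rpow_mul hM0, ← Real.rpow_mul hS0, mul_comm]
        congr 2 <;> field_simp

/-- The weighted arithmetic-geometric mean step, together with `p ^ (1 / p) ≤ e`. -/
lemma mul_interpolation_le (r : ℝ) (hr0 : 0 < r) (hr2 : r ≤ 2) (p : ℝ) (hp : 2 ≤ p)
    (A M : ℝ) (hA : 0 ≤ A) (hM : 0 ≤ M) :
    p ^ ((1 : ℝ) / r) * (A ^ (2 / p) * M ^ (1 - 2 / p)) ≤
      Real.exp ((2 - r) / r) * (Real.sqrt p * A + p ^ ((1 : ℝ) / r) * M) := by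
  have hp0 : 0 < p := by linarith
  have hθ0 : 0 ≤ 2 / p := by positivity
  have hθ1 : 0 ≤ 1 - 2 / p := by
    rw [sub_nonneg, div_le_one hp0]
    exact hp
  have hx : 0 ≤ Real.sqrt p * A := by positivity
  have hy : 0 ≤ p ^ ((1 : ℝ) / r) * M := by positivity
  have hexp : p ^ ((2 - r) / r / p) ≤ Real.exp ((2 - r) / r) := by
    rw [Real.rpow_def_of_pos hp0, Real.exp_le_exp]
    have hlog : Real.log p ≤ p := Real.log_le_self hp0.le
    have hc : 0 ≤ (2 - r) / r / p := div_nonneg (div_nonneg (by linarith) hr0.le) hp0.le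
    calc Real.log p * ((2 - r) / r / p) ≤ p * ((2 - r) / r / p) :=
          mul_le_mul_of_nonneg_right hlog hc
      _ = (2 - r) / r := by field_simp
  have hamgm : (Real.sqrt p * A) ^ (2 / p) * (p ^ ((1 : ℝ) / r) * M) ^ (1 - 2 / p) ≤
      Real.sqrt p * A + p ^ ((1 : ℝ) / r) * M := by
    have h := Real.geom_mean_le_arith_mean2_weighted hθ0 hθ1 hx hy (by ring)
    nlinarith [mul_nonneg hθ0 hy, mul_nonneg hθ1 hx]
  have hpow : p ^ ((1 : ℝ) / r) =
      p ^ ((2 - r) / r / p) * ((Real.sqrt p) ^ (2 / p) * (p ^ ((1 : ℝ) / r)) ^ (1 - 2 / p)) := by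
    rw [Real.sqrt_eq_rpow, ← Real.rpow_mul hp0.le, ← Real.rpow_mul hp0.le, ← Real.rpow_add hp0,
      ← Real.rpow_add hp0]
    congr 1
    field_simp
    ring
  calc p ^ ((1 : ℝ) / r) * (A ^ (2 / p) * M ^ (1 - 2 / p))
      = p ^ ((2 - r) / r / p) *
          ((Real.sqrt p * A) ^ (2 / p) * (p ^ ((1 : ℝ) / r) * M) ^ (1 - 2 / p)) := by
        rw [Real.mul_rpow (Real.sqrt_nonneg p) hA, Real.mul_rpow (by positivity) hM]
        conv_lhs => rw [hpow]
        ring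
    _ ≤ _ := mul_le_mul hexp hamgm (by positivity) (Real.exp_pos _).le

/-- For `0 < r ≤ 2`, `p ≥ 2` and any `t ∈ ℓ²`,
`√p ‖t‖₂ + p^(1/r) ‖t‖_p ≤ (1 + e^((2-r)/r)) (√p ‖t‖₂ + p^(1/r) ‖t‖_∞)`. -/
theorem lp_norm_interpolation_bound
    (r : ℝ) (hr0 : 0 < r) (hr2 : r ≤ 2)
    (p : ℝ) (hp : 2 ≤ p)
    (t : ℕ → ℝ) (ht : Memℓp t 2) :
    Real.sqrt p * (∑' k, |t k| ^ (2 : ℝ)) ^ ((1 : ℝ) / 2) +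
        p ^ ((1 : ℝ) / r) * (∑' k, |t k| ^ p) ^ ((1 : ℝ) / p) ≤
      (1 + Real.exp ((2 - r) / r)) *
        (Real.sqrt p * (∑' k, |t k| ^ (2 : ℝ)) ^ ((1 : ℝ) / 2) +
          p ^ ((1 : ℝ) / r) * (⨆ k, |t k|)) := by
  have hA0 : 0 ≤ (∑' k, |t k| ^ (2 : ℝ)) ^ ((1 : ℝ) / 2) :=
    Real.rpow_nonneg (tsum_nonneg fun k => by positivity) _
  have hM0 : 0 ≤ ⨆ k, |t k| := Real.iSup_nonneg fun k => abs_nonneg _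
  have hp0 : 0 < p := by linarith
  have h1 := mul_le_mul_of_nonneg_left (lp_le_interpolation p hp t ht)
    (Real.rpow_nonneg hp0.le ((1 : ℝ) / r))
  have h2 := mul_interpolation_le r hr0 hr2 p hp _ _ hA0 hM0
  have h3 := mul_nonneg (Real.rpow_nonneg hp0.le ((1 : ℝ) / r)) hM0
  linarith
end

section
/- Let 0 < r < 2 and let s satisfy 1/s + 1/2 = 1/r. Let g be a standard Gaussian random variable and Y an independent symmetric random variable with P(|Y| > t) = exp(-t^s) for all t ≥ 0. Then for all t ≥ 2, exp(-2 t^r) ≤ P(|gY| ≥ t) ≤ 2 exp(-t^r / 2). -/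
open MeasureTheory ProbabilityTheory

/-!
Write `u = t ^ r`. The relation between `r` and `s` says `s * (1 - r / 2) = r`, so that the
factorisation `t = t ^ (r / 2) * t ^ (1 - r / 2)` balances the two tails: `(t ^ (r / 2)) ^ 2 = u`
and `(t ^ (1 - r / 2)) ^ s = u`.

*Upper bound* (`upper_tail`). If `|gY| ≥ t`, then `|g| ≥ t ^ (r / 2)` or `|Y| > t ^ (1 - r / 2)`.
The second event has probability `exp (-u)`, and the first at most `exp (-u / 2)` by the sharp
two-sided tail bound `P(|g| ≥ x) ≤ exp (-x ^ 2 / 2)`, `stdGaussian_abs_tail_le`.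

*Lower bound* (`lower_tail`). Conditioning on `g` and substituting `|g| = t ^ (r / 2) * y` gives
`P(|gY| ≥ t) ≥ 2 √u / √(2π) * ∫ exp (-u * ψ y) dy` over any window `[b, c] ⊆ (0, ∞)`, where
`ψ y = y ^ (-s) + y ^ 2 / 2` (`mixture_le_tail`). If the average of `ψ` over `[b, c]` is at most
`2`, convexity of `exp` bounds the integral below by `(c - b) * exp (-2 * u)`
(`exp_phase_integral_ge`), and it remains that `2 √u (c - b) ≥ √(2π)`. Such a window is found in
`exists_window`, separately for `s ≤ 1`, `1 < s ≤ 2` and `2 < s`; since `t ≥ 2`, these ranges force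
`u ≥ 1`, `u ≥ 2 ^ (2 / 3)` and `u ≥ 2` respectively. (Bounding by a product
`P(|g| ≥ x) * P(|Y| ≥ t / x)` at `x = t ^ (r / 2)` would be too weak for `u` near `1`.)
-/

/-! ### The upper bound -/

/-- The sharp prefactor `1` comes from shifting: for `v ≥ x ≥ 0` one has
`exp (-v ^ 2 / 2) ≤ exp (-x ^ 2 / 2) * exp (-(v - x) ^ 2 / 2)`, and the half-line integral of the
last factor is half of the total Gaussian mass. -/
lemma stdGaussian_abs_tail_le (x : ℝ) (hx : 0 ≤ x) :
    gaussianReal 0 1 {v | x ≤ |v|} ≤ ENNReal.ofReal (Real.exp (-x ^ 2 / 2)) := by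
  have hms : MeasurableSet {v : ℝ | x ≤ |v|} := measurableSet_le measurable_const measurable_id.abs
  rw [gaussianReal_apply_eq_integral 0 one_ne_zero]
  refine ENNReal.ofReal_le_ofReal ?_
  rw [← integral_indicator hms]
  have hexp : Integrable (fun v : ℝ => Real.exp (-(1 / 2) * v ^ 2)) :=
    integrable_exp_neg_mul_sq (by norm_num)
  have h1 : ∫ v, {v : ℝ | x ≤ |v|}.indicator (gaussianPDFReal 0 1) v
      = ∫ v, (fun w : ℝ => (Set.Ici x).indicator (gaussianPDFReal 0 1) w) |v| := by
    congr 1 with v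
    simp [Set.indicator_apply, gaussianPDFReal]
  rw [h1, integral_comp_abs, ← integral_indicator measurableSet_Ioi]
  have h2 : ∫ v, (Set.Ioi (0 : ℝ)).indicator
        (fun w : ℝ => (Set.Ici x).indicator (gaussianPDFReal 0 1) w) v
      ≤ ∫ v, (fun w : ℝ => ((√(2 * Real.pi))⁻¹ * Real.exp (-x ^ 2 / 2)) *
          (Set.Ici (0 : ℝ)).indicator (fun w => Real.exp (-(1 / 2) * w ^ 2)) w) (v - x) := by
    refine integral_mono ?_ ?_ ?_
    · exact (((integrable_gaussianPDFReal 0 1).indicator measurableSet_Ici).indicator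
        measurableSet_Ioi)
    · exact ((hexp.indicator measurableSet_Ici).const_mul _).comp_sub_right x
    · intro v
      by_cases hv : x ≤ v
      · have : (Set.Ioi (0 : ℝ)).indicator
            (fun w : ℝ => (Set.Ici x).indicator (gaussianPDFReal 0 1) w) v
            ≤ gaussianPDFReal 0 1 v := by
          refine (Set.indicator_le_self' (fun _ _ => Set.indicator_nonneg
            (fun _ _ => gaussianPDFReal_nonneg _ _ _) _) v).trans ?_
          exact Set.indicator_le_self' (fun _ _ => gaussianPDFReal_nonneg _ _ _) v
        refine this.trans ?_
        have h0 : v - x ∈ Set.Ici (0 : ℝ) := by simpa using hv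
        simp only [Set.indicator_of_mem h0, gaussianPDFReal, mul_assoc, ← Real.exp_add]
        simp only [NNReal.coe_one, mul_one, sub_zero]
        gcongr
        nlinarith
      · have h0 : v - x ∉ Set.Ici (0 : ℝ) := by simpa using hv
        simp only [Set.indicator_of_notMem h0]
        have : v ∉ Set.Ici x := by simpa using hv
        simp [Set.indicator_apply, hv]
  have hshift := integral_sub_right_eq_self (μ := volume)
    (fun w : ℝ => ((√(2 * Real.pi))⁻¹ * Real.exp (-x ^ 2 / 2)) *
      (Set.Ici (0 : ℝ)).indicator (fun w => Real.exp (-(1 / 2) * w ^ 2)) w) x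
  rw [hshift, integral_const_mul,
    integral_indicator measurableSet_Ici, integral_Ici_eq_integral_Ioi, integral_gaussian_Ioi] at h2
  have h3 : √(Real.pi / (1 / 2)) = √(2 * Real.pi) := by congr 1; ring
  rw [h3] at h2
  have h4 : 0 < √(2 * Real.pi) := by positivity
  calc _ ≤ 2 * _ := mul_le_mul_of_nonneg_left h2 (by norm_num)
    _ = _ := by field_simp

lemma upper_tail (r s : ℝ) (hs : s * (1 - r / 2) = r)
    {Ω : Type*} [MeasureSpace Ω]
    (g Y : Ω → ℝ) (hgmeas : Measurable g)
    (hgauss : Measure.map g ℙ = gaussianReal 0 1)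
    (hYtail : ∀ t : ℝ, 0 ≤ t → ℙ {ω | t < |Y ω|} = ENNReal.ofReal (Real.exp (-t ^ s)))
    (t : ℝ) (ht : 0 < t) :
    ℙ {ω | t ≤ |g ω * Y ω|} ≤ ENNReal.ofReal (2 * Real.exp (-t ^ r / 2)) := by
  have hx : 0 < t ^ (r / 2) := by positivity
  have hy : 0 < t ^ (1 - r / 2) := by positivity
  have hxy : t ^ (r / 2) * t ^ (1 - r / 2) = t := by
    rw [← Real.rpow_add ht]; simp
  have hsub : {ω | t ≤ |g ω * Y ω|} ⊆
      g ⁻¹' {v | t ^ (r / 2) ≤ |v|} ∪ {ω | t ^ (1 - r / 2) < |Y ω|} := by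
    intro ω hω
    by_contra hcon
    simp only [Set.mem_union, Set.mem_preimage, Set.mem_ofPred_eq, not_or, not_le, not_lt] at hcon hω
    rw [abs_mul] at hω
    nlinarith [mul_le_mul_of_nonneg_left hcon.2 (abs_nonneg (g ω)),
      mul_lt_mul_of_pos_right hcon.1 hy]
  have hms : MeasurableSet {v : ℝ | t ^ (r / 2) ≤ |v|} :=
    measurableSet_le measurable_const measurable_id.abs
  have hG := stdGaussian_abs_tail_le _ hx.le
  rw [← hgauss, Measure.map_apply hgmeas hms] at hG
  have e1 : (t ^ (r / 2)) ^ 2 = t ^ r := by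
    rw [← Real.rpow_natCast, ← Real.rpow_mul ht.le]; congr 1; push_cast; ring
  have e2 : (t ^ (1 - r / 2)) ^ s = t ^ r := by
    rw [← Real.rpow_mul ht.le, mul_comm, hs]
  have hY := hYtail _ hy.le
  rw [e2] at hY
  rw [e1] at hG
  calc _ ≤ _ := measure_mono hsub
    _ ≤ _ := measure_union_le _ _
    _ ≤ ENNReal.ofReal (Real.exp (-t ^ r / 2)) + ENNReal.ofReal (Real.exp (-t ^ r / 2)) := by
      gcongr
      rw [hY]
      refine ENNReal.ofReal_le_ofReal (Real.exp_le_exp.2 ?_)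
      have : 0 < t ^ r := by positivity
      linarith
    _ = _ := by rw [← ENNReal.ofReal_add (by positivity) (by positivity), two_mul]

/-! ### The phase `y ^ (-s) + y ^ 2 / 2` -/

lemma phase_continuousOn (s b c : ℝ) (hb : 0 < b) :
    ContinuousOn (fun y : ℝ => y ^ (-s) + y ^ 2 / 2) (Set.Icc b c) := by
  refine ContinuousOn.add (fun y hy => ?_) (by fun_prop)
  exact (Real.continuousAt_rpow_const _ _ (Or.inl (hb.trans_le hy.1).ne')).continuousWithinAt

/-- An explicit bound for the integral of the phase `ψ y = y ^ (-s) + y ^ 2 / 2`, given an upper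
bound for `y ^ (-s)` by a combination of `1` and `y ^ (-2)`. -/
lemma phase_integral_le (s b c α β : ℝ) (hb : 0 < b) (hbc : b ≤ c)
    (h : ∀ y ∈ Set.Icc b c, y ^ (-s) ≤ α + β * y ^ (-2 : ℤ)) :
    ∫ y in b..c, (y ^ (-s) + y ^ 2 / 2)
      ≤ α * (c - b) + β * (1 / b - 1 / c) + (c ^ 3 - b ^ 3) / 6 := by
  have h0 : (0 : ℝ) ∉ Set.uIcc b c := by
    rw [Set.uIcc_of_le hbc]; exact fun h => hb.not_ge h.1
  have hz : IntervalIntegrable (fun y : ℝ => y ^ (-2 : ℤ)) volume b c :=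
    intervalIntegral.intervalIntegrable_zpow (Or.inr h0)
  have hsq : IntervalIntegrable (fun y : ℝ => y ^ 2 / 2) volume b c :=
    (by fun_prop : Continuous fun y : ℝ => y ^ 2 / 2).intervalIntegrable _ _
  have hα : IntervalIntegrable (fun _ : ℝ => α) volume b c := intervalIntegrable_const
  calc _ ≤ ∫ y in b..c, (α + β * y ^ (-2 : ℤ) + y ^ 2 / 2) := by
        refine intervalIntegral.integral_mono_on hbc ?_ ((hα.add (hz.const_mul β)).add hsq) ?_
        · exact ((phase_continuousOn s b c hb).mono (by rw [Set.uIcc_of_le hbc])).intervalIntegrable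
        · intro y hy
          linarith [h y hy]
    _ = _ := by
        rw [intervalIntegral.integral_add (hα.add (hz.const_mul β)) hsq,
          intervalIntegral.integral_add hα (hz.const_mul β),
          intervalIntegral.integral_const_mul, intervalIntegral.integral_div,
          integral_zpow (Or.inr ⟨by norm_num, h0⟩), integral_pow]
        have : 0 < c := hb.trans_le hbc
        norm_num
        field_simp
        ring

/-- Jensen's inequality for `exp` over a window on which the phase has average at most `2`, obtained
by integrating the tangent-line bound `exp (-u * ψ) ≥ exp (-2 * u) * (1 + 2 * u - u * ψ)`. -/
lemma exp_phase_integral_ge (s u b c : ℝ) (hu : 0 ≤ u) (hb : 0 < b) (hbc : b ≤ c)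
    (h : ∫ y in b..c, (y ^ (-s) + y ^ 2 / 2) ≤ 2 * (c - b)) :
    (c - b) * Real.exp (-2 * u) ≤ ∫ y in b..c, Real.exp (-u * (y ^ (-s) + y ^ 2 / 2)) := by
  have hc := (phase_continuousOn s b c hb).mono (by rw [Set.uIcc_of_le hbc] : Set.uIcc b c ⊆ _)
  have hi : IntervalIntegrable (fun y : ℝ => y ^ (-s) + y ^ 2 / 2) volume b c :=
    hc.intervalIntegrable
  have hk : IntervalIntegrable (fun _ : ℝ => 1 + 2 * u) volume b c := intervalIntegrable_const
  calc _ ≤ Real.exp (-2 * u) * ((c - b) * (1 + 2 * u)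
          - u * ∫ y in b..c, (y ^ (-s) + y ^ 2 / 2)) := by
        rw [mul_comm]
        refine mul_le_mul_of_nonneg_left ?_ (Real.exp_pos _).le
        nlinarith [mul_le_mul_of_nonneg_left h hu]
    _ = ∫ y in b..c, Real.exp (-2 * u) * ((1 + 2 * u) - u * (y ^ (-s) + y ^ 2 / 2)) := by
        rw [intervalIntegral.integral_const_mul,
          intervalIntegral.integral_sub hk (hi.const_mul u), intervalIntegral.integral_const_mul,
          intervalIntegral.integral_const, smul_eq_mul]
    _ ≤ _ := by
        refine intervalIntegral.integral_mono_on hbc ((hk.sub (hi.const_mul u)).const_mul _) ?_ ?_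
        · exact (Real.continuous_exp.comp_continuousOn (hc.const_smul (-u))).intervalIntegrable
        · intro y _
          have := Real.add_one_le_exp (2 * u - u * (y ^ (-s) + y ^ 2 / 2))
          calc _ ≤ Real.exp (-2 * u) * Real.exp (2 * u - u * (y ^ (-s) + y ^ 2 / 2)) := by
                gcongr; linarith
            _ = _ := by rw [← Real.exp_add]; congr 1; ring

/-- A window on which the phase has average at most `2` and which is long enough that the Gaussian
normalisation satisfies `2 √u (c - b) ≥ √(2π)`. The endpoints are numerical choices. -/
lemma exists_window (s u : ℝ) (hs0 : 0 < s) (hu1 : 1 ≤ u) (hu2 : 1 < s → 3 / 2 ≤ u)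
    (hu3 : 2 < s → 2 ≤ u) :
    ∃ b c : ℝ, 0 < b ∧ b ≤ c ∧ ∫ y in b..c, (y ^ (-s) + y ^ 2 / 2) ≤ 2 * (c - b) ∧
      2 * Real.pi ≤ 4 * u * (c - b) ^ 2 := by
  have hpi := Real.pi_lt_d2
  have split : ∀ b c : ℝ, 0 < b → b ≤ 1 → 1 ≤ c →
      ∫ y in b..c, (y ^ (-s) + y ^ 2 / 2) =
        (∫ y in b..1, (y ^ (-s) + y ^ 2 / 2)) + ∫ y in (1 : ℝ)..c, (y ^ (-s) + y ^ 2 / 2) := by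
    intro b c hb hb1 hc1
    refine (intervalIntegral.integral_add_adjacent_intervals ?_ ?_).symm
    · exact ((phase_continuousOn s b 1 hb).mono (by rw [Set.uIcc_of_le hb1])).intervalIntegrable
    · exact ((phase_continuousOn s 1 c one_pos).mono
        (by rw [Set.uIcc_of_le hc1])).intervalIntegrable
  have ge1 : ∀ y : ℝ, 1 ≤ y → y ^ (-s) ≤ 1 := fun y hy =>
    Real.rpow_le_one_of_one_le_of_nonpos hy (by linarith)
  have z2 : ∀ y : ℝ, y ^ (-2 : ℤ) = y ^ (-2 : ℝ) := fun y => by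
    rw [← Real.rpow_intCast]; norm_num
  rcases le_or_gt s 1 with h1 | h1
  -- For `y ≤ 1`, `y ^ (-s) ≤ y⁻¹ ≤ (1 + y ^ (-2)) / 2`, which avoids a logarithm in the integral.
  · refine ⟨1 / 2, 9 / 5, by norm_num, by norm_num, ?_, by nlinarith⟩
    rw [split _ _ (by norm_num) (by norm_num) (by norm_num)]
    have A := phase_integral_le s (1 / 2) 1 (1 / 2) (1 / 2) (by norm_num) (by norm_num) (by
      intro y hy
      have hy0 : 0 < y := by linarith [hy.1]
      have : y ^ (-s) ≤ y ^ (-1 : ℝ) := Real.rpow_le_rpow_of_exponent_ge hy0 hy.2 (by linarith)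
      rw [Real.rpow_neg_one] at this
      have e : y ^ (-2 : ℤ) = y⁻¹ ^ 2 := by rw [zpow_neg, inv_pow]; norm_cast
      rw [e]
      nlinarith [sq_nonneg (y⁻¹ - 1)])
    have B := phase_integral_le s 1 (9 / 5) 1 0 (by norm_num) (by norm_num) (by
      intro y hy
      linarith [ge1 y hy.1])
    norm_num at A B ⊢
    linarith
  rcases le_or_gt s 2 with h2 | h2
  · refine ⟨7 / 10, 9 / 5, by norm_num, by norm_num, ?_, by nlinarith [hu2 h1]⟩
    rw [split _ _ (by norm_num) (by norm_num) (by norm_num)]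
    have A := phase_integral_le s (7 / 10) 1 0 1 (by norm_num) (by norm_num) (by
      intro y hy
      rw [z2, zero_add, one_mul]
      exact Real.rpow_le_rpow_of_exponent_ge (by linarith [hy.1]) hy.2 (by linarith))
    have B := phase_integral_le s 1 (9 / 5) 1 0 (by norm_num) (by norm_num) (by
      intro y hy
      linarith [ge1 y hy.1])
    norm_num at A B ⊢
    linarith
  · refine ⟨1, 2, by norm_num, by norm_num, ?_, by nlinarith [hu3 h2]⟩
    have A := phase_integral_le s 1 2 0 1 (by norm_num) (by norm_num) (by
      intro y hy
      rw [z2, zero_add, one_mul]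
      exact Real.rpow_le_rpow_of_exponent_le hy.1 (by linarith))
    norm_num at A ⊢
    linarith

/-! ### The lower bound -/

/-- Conditioning on `g`: the tail of `gY` is at least the Gaussian average of
`P(|Y| > t / |x|) = exp (-(t / |x|) ^ s)` over `p < |x| ≤ q`. The factor `2` accounts for both signs
of `x`. -/
lemma mixture_le_tail (s : ℝ)
    {Ω : Type*} [MeasureSpace Ω] [IsProbabilityMeasure (ℙ : Measure Ω)]
    (g Y : Ω → ℝ) (hgmeas : Measurable g) (hYmeas : Measurable Y)
    (hgauss : Measure.map g ℙ = gaussianReal 0 1)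
    (hYtail : ∀ t : ℝ, 0 ≤ t → ℙ {ω | t < |Y ω|} = ENNReal.ofReal (Real.exp (-t ^ s)))
    (hindep : IndepFun g Y ℙ) (t : ℝ) (ht : 0 < t) (p q : ℝ) (hp : 0 < p) (hpq : p ≤ q) :
    ENNReal.ofReal (2 * ∫ x in p..q, gaussianPDFReal 0 1 x * Real.exp (-(t / x) ^ s))
      ≤ ℙ {ω | t ≤ |g ω * Y ω|} := by
  set F : ℝ → ℝ := fun x => gaussianPDFReal 0 1 x * Real.exp (-(t / x) ^ s) with hF
  set G : ℝ → ℝ := (Set.Ioc p q).indicator F with hG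
  have hFm : Measurable F := by
    have := measurable_gaussianPDFReal 0 1
    fun_prop
  have hFle : ∀ x, 0 < x → F x ≤ gaussianPDFReal 0 1 x := by
    intro x hx
    refine mul_le_of_le_one_right (gaussianPDFReal_nonneg _ _ _) (Real.exp_le_one_iff.2 ?_)
    have : 0 ≤ (t / x) ^ s := by positivity
    linarith
  have hF0 : ∀ x, 0 ≤ F x := fun x =>
    mul_nonneg (gaussianPDFReal_nonneg _ _ _) (Real.exp_pos _).le
  have hG0 : ∀ x, 0 ≤ G x := fun x => Set.indicator_nonneg (fun x _ => hF0 x) x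
  have hGm : Measurable G := hFm.indicator measurableSet_Ioc
  have hGle : ∀ x, G x ≤ gaussianPDFReal 0 1 x := by
    intro x
    by_cases hx : x ∈ Set.Ioc p q
    · simp only [hG, Set.indicator_of_mem hx]; exact hFle x (hp.trans hx.1)
    · simp only [hG, Set.indicator_of_notMem hx]; exact gaussianPDFReal_nonneg _ _ _
  have habs : ∀ x, gaussianPDFReal 0 1 |x| = gaussianPDFReal 0 1 x := by
    intro x; simp [gaussianPDFReal]
  have hGi : Integrable (fun x => G |x|) := by
    refine (integrable_gaussianPDFReal 0 1).mono' (hGm.comp measurable_id.abs).aestronglyMeasurable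
      (ae_of_all _ fun x => ?_)
    rw [Real.norm_of_nonneg (hG0 _), ← habs]
    exact hGle _
  have hint : 2 * ∫ x in p..q, F x = ∫ x, G |x| := by
    rw [integral_comp_abs, intervalIntegral.integral_of_le hpq, hG,
      setIntegral_indicator measurableSet_Ioc]
    congr 3
    ext x
    simp only [Set.mem_Ioc, Set.mem_inter_iff, Set.mem_Ioi]
    exact ⟨fun h => ⟨hp.trans h.1, h⟩, fun h => h.2⟩
  rw [hint, ofReal_integral_eq_lintegral_ofReal hGi (ae_of_all _ fun x => hG0 _)]
  have hSm : MeasurableSet {z : ℝ × ℝ | t ≤ |z.1 * z.2|} :=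
    measurableSet_le measurable_const (measurable_fst.mul measurable_snd).abs
  have hprod := (indepFun_iff_map_prod_eq_prod_map_map hgmeas.aemeasurable
    hYmeas.aemeasurable).1 hindep
  have hYp : IsProbabilityMeasure (Measure.map Y ℙ) :=
    Measure.isProbabilityMeasure_map hYmeas.aemeasurable
  have e1 : ℙ {ω | t ≤ |g ω * Y ω|} =
      ∫⁻ x, (Measure.map Y ℙ) (Prod.mk x ⁻¹' {z : ℝ × ℝ | t ≤ |z.1 * z.2|}) ∂gaussianReal 0 1 := by
    rw [← Measure.prod_apply hSm, ← hgauss, ← hprod,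
      Measure.map_apply (hgmeas.prodMk hYmeas) hSm]
    rfl
  rw [e1, gaussianReal_of_var_ne_zero 0 one_ne_zero,
    lintegral_withDensity_eq_lintegral_mul _ (measurable_gaussianPDF 0 1)
      (measurable_measure_prodMk_left hSm)]
  refine lintegral_mono fun x => ?_
  simp only [Pi.mul_apply, gaussianPDF]
  by_cases hx : |x| ∈ Set.Ioc p q
  · have hx0 : 0 < |x| := hp.trans hx.1
    simp only [hG, Set.indicator_of_mem hx, hF, habs]
    rw [ENNReal.ofReal_mul (gaussianPDFReal_nonneg _ _ _), ← hYtail _ (by positivity),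
      Measure.map_apply hYmeas (measurable_prodMk_left hSm)]
    gcongr
    intro ω hω
    simp only [Set.mem_ofPred_eq, Set.mem_preimage] at hω ⊢
    rw [div_lt_iff₀ hx0] at hω
    rw [abs_mul, mul_comm]
    exact hω.le
  · simp [hG, Set.indicator_of_notMem hx]

lemma lower_tail (r s : ℝ) (hr0 : 0 < r) (hs0 : 0 < s) (hs : s * (1 - r / 2) = r)
    {Ω : Type*} [MeasureSpace Ω] [IsProbabilityMeasure (ℙ : Measure Ω)]
    (g Y : Ω → ℝ) (hgmeas : Measurable g) (hYmeas : Measurable Y)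
    (hgauss : Measure.map g ℙ = gaussianReal 0 1)
    (hYtail : ∀ t : ℝ, 0 ≤ t → ℙ {ω | t < |Y ω|} = ENNReal.ofReal (Real.exp (-t ^ s)))
    (hindep : IndepFun g Y ℙ) (t : ℝ) (ht : 2 ≤ t) :
    ENNReal.ofReal (Real.exp (-2 * t ^ r)) ≤ ℙ {ω | t ≤ |g ω * Y ω|} := by
  have ht0 : 0 < t := by linarith
  have hmono : ∀ a, 0 ≤ a → a ≤ r → (2 : ℝ) ^ a ≤ t ^ r := fun a ha har =>
    (Real.rpow_le_rpow_of_exponent_le (by norm_num) har).trans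
      (Real.rpow_le_rpow (by norm_num) ht hr0.le)
  have hr2 : r < 2 := by nlinarith
  obtain ⟨b, c, hb, hbc, hI, hpi⟩ := exists_window s (t ^ r) hs0
    (by simpa using hmono 0 le_rfl hr0.le)
    (by
      intro h
      refine le_trans ?_ (hmono (2 / 3) (by norm_num) (by nlinarith))
      have e : ((2 : ℝ) ^ (2 / 3 : ℝ)) ^ 3 = 4 := by
        rw [← Real.rpow_natCast, ← Real.rpow_mul (by norm_num)]; norm_num
      refine le_of_pow_le_pow_left₀ (n := 3) (by norm_num) (by positivity) ?_
      rw [e]; norm_num)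
    (by
      intro h
      simpa using hmono 1 (by norm_num) (by nlinarith))
  have hu : 0 < t ^ r := by positivity
  have hk : 0 < t ^ (r / 2) := by positivity
  have e1 : (t ^ (r / 2)) ^ 2 = t ^ r := by
    rw [← Real.rpow_natCast, ← Real.rpow_mul ht0.le]; congr 1; push_cast; ring
  refine le_trans (ENNReal.ofReal_le_ofReal ?_) (mixture_le_tail s g Y hgmeas hYmeas hgauss hYtail
    hindep t ht0 (t ^ (r / 2) * b) (t ^ (r / 2) * c) (by positivity) (by gcongr))
  rw [← intervalIntegral.smul_integral_comp_mul_left]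
  have e2 : ∫ y in b..c, gaussianPDFReal 0 1 (t ^ (r / 2) * y) *
        Real.exp (-(t / (t ^ (r / 2) * y)) ^ s)
      = (√(2 * Real.pi))⁻¹ * ∫ y in b..c, Real.exp (-t ^ r * (y ^ (-s) + y ^ 2 / 2)) := by
    rw [← intervalIntegral.integral_const_mul]
    refine intervalIntegral.integral_congr fun y hy => ?_
    rw [Set.uIcc_of_le hbc] at hy
    have hy0 : 0 < y := hb.trans_le hy.1
    have e3 : (t / (t ^ (r / 2) * y)) ^ s = t ^ r * y ^ (-s) := by
      have : t / (t ^ (r / 2) * y) = t ^ (1 - r / 2) * y⁻¹ := by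
        rw [Real.rpow_sub ht0, Real.rpow_one]; field_simp
      rw [this, Real.mul_rpow (by positivity) (by positivity), ← Real.rpow_mul ht0.le,
        mul_comm (1 - r / 2), hs, Real.inv_rpow hy0.le, Real.rpow_neg hy0.le]
    simp only [gaussianPDFReal, NNReal.coe_one, mul_one, sub_zero, e3, mul_assoc, ← Real.exp_add]
    rw [mul_pow, e1]
    congr 2
    ring
  rw [e2, smul_eq_mul]
  have h4 : 0 < √(2 * Real.pi) := by positivity
  have hJ := exp_phase_integral_ge s (t ^ r) b c hu.le hb hbc hI
  have h5 : √(2 * Real.pi) ≤ 2 * t ^ (r / 2) * (c - b) := by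
    refine Real.sqrt_le_iff.2 ⟨by have := sub_nonneg.2 hbc; positivity, ?_⟩
    rw [mul_pow, mul_pow, e1]
    linarith
  calc Real.exp (-2 * t ^ r)
      ≤ (√(2 * Real.pi))⁻¹ * (2 * t ^ (r / 2) * (c - b)) * Real.exp (-2 * t ^ r) := by
        refine le_mul_of_one_le_left (Real.exp_pos _).le ?_
        rw [inv_mul_eq_div, one_le_div h4]
        exact h5
    _ = 2 * (t ^ (r / 2) * ((√(2 * Real.pi))⁻¹ * ((c - b) * Real.exp (-2 * t ^ r)))) := by ring
    _ ≤ _ := by gcongr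

/-- If `g` is standard Gaussian and `Y` is an independent symmetric random variable with
`P(|Y| > t) = exp(-t^s)` where `1/s + 1/2 = 1/r`, `0 < r < 2`, then for `t ≥ 2`,
`exp(-2 t^r) ≤ P(|gY| ≥ t) ≤ 2 exp(-t^r / 2)`. -/
theorem gaussian_times_weibull_tail
    (r s : ℝ) (hr0 : 0 < r) (hr2 : r < 2) (hs : 1 / s + 1 / 2 = 1 / r)
    (Ω : Type*) [MeasureSpace Ω] [IsProbabilityMeasure (ℙ : Measure Ω)]
    (g Y : Ω → ℝ) (hgmeas : Measurable g) (hYmeas : Measurable Y)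
    (hgauss : Measure.map g ℙ = gaussianReal 0 1)
    (hYsymm : Measure.map Y ℙ = Measure.map (fun ω => -(Y ω)) ℙ)
    (hYtail : ∀ t : ℝ, 0 ≤ t → ℙ {ω | t < |Y ω|} = ENNReal.ofReal (Real.exp (-t ^ s)))
    (hindep : IndepFun g Y ℙ) :
    ∀ t : ℝ, 2 ≤ t →
      ENNReal.ofReal (Real.exp (-2 * t ^ r)) ≤ ℙ {ω | t ≤ |g ω * Y ω|} ∧
      ℙ {ω | t ≤ |g ω * Y ω|} ≤ ENNReal.ofReal (2 * Real.exp (-t ^ r / 2)) := by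
  have hs0 : 0 < s := by
    have : 1 / 2 < 1 / r := one_div_lt_one_div_of_lt hr0 hr2
    exact one_div_pos.1 (by linarith)
  have hrel : s * (1 - r / 2) = r := by
    field_simp at hs
    linarith
  intro t ht
  exact ⟨lower_tail r s hr0 hs0 hrel g Y hgmeas hYmeas hgauss hYtail hindep t ht,
    upper_tail r s hrel g Y hgmeas hgauss hYtail t (by linarith)⟩
end

section
/- Let 0 < r < 2 and let s satisfy 1/s + 1/2 = 1/r. There exist a constant L(r) depending only on r, and a probability space carrying random variables X, Y, g such that: X is symmetric with P(|X| > t) = exp(-t^r) for all t ≥ 0; Y is symmetric with P(|Y| > t) = exp(-t^s) for all t ≥ 0; g is standard Gaussian and independent of Y; and almost surely |gY| ≤ L(r)(1 + |X|) and |X| ≤ L(r)(1 + |gY|). -/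
/-!
The pair `(g, Y)` lives on `ℝ × ℝ` with the product of two standard Gaussian laws, and `X` is an odd
function of `g * Y`, chosen by quantile matching.

If `μ` is a symmetric atomless law on `ℝ` with two-sided tail `N t = μ {x | t < |x|} > 0`, then
`N |x|` is uniform on `[0, 1]` under `μ` (`measure_absTail_lt`), so `-log (N |x|)` is a standard
exponential variable and `x ↦ sign x * (-log (N |x|)) ^ (1 / p)` carries `μ` to the symmetric Weibull
law with exponent `p` (`weibullMap_tail`). This is used twice: to obtain `Y` from the second Gaussian
coordinate, and to obtain `X` from the law of `g * Y`, which is symmetric and atomless.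

By construction `|X| ^ r = -log N |gY|` with `N` the tail of `g * Y`, so both bounds amount to
`-log (N t)` being comparable to `t ^ r` up to additive and multiplicative constants. Split `t = a * b`
with `a = t ^ (r / 2)` and `b = t ^ (r / s)`; the relation between `r` and `s` makes this a
factorization, and `a ^ 2 = b ^ s = t ^ r`. Then
`P(|g| > a) P(|Y| > b) ≤ N t ≤ P(|g| > a) + P(|Y| > b)`, and the elementary Gaussian tail bounds
`c * exp (-a ^ 2 - 1) ≤ P(|g| > a) ≤ 2 * exp (-a ^ 2 / 2)` conclude
(`neg_log_absTail_le`, `rpow_le_neg_log_absTail`).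
-/

/-- A probability space carrying a Weibull(`r`) variable `X`, a Weibull(`s`) variable `Y` and
a standard Gaussian `g` independent of `Y`, such that `|gY| ≤ L(1 + |X|)` and
`|X| ≤ L(1 + |gY|)` almost surely. -/
structure GaussianWeibullCoupling (r s L : ℝ) where
  Ω : Type
  [m : MeasurableSpace Ω]
  P : MeasureTheory.Measure Ω
  probP : MeasureTheory.IsProbabilityMeasure P
  X : Ω → ℝ
  Y : Ω → ℝ
  g : Ω → ℝ
  measX : Measurable X
  measY : Measurable Y
  measG : Measurable g
  symmX : MeasureTheory.Measure.map X P = MeasureTheory.Measure.map (fun ω => -(X ω)) P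
  tailX : ∀ t : ℝ, 0 ≤ t → P {ω | t < |X ω|} = ENNReal.ofReal (Real.exp (-t ^ r))
  symmY : MeasureTheory.Measure.map Y P = MeasureTheory.Measure.map (fun ω => -(Y ω)) P
  tailY : ∀ t : ℝ, 0 ≤ t → P {ω | t < |Y ω|} = ENNReal.ofReal (Real.exp (-t ^ s))
  gaussG : MeasureTheory.Measure.map g P = ProbabilityTheory.gaussianReal 0 1
  indepGY : ProbabilityTheory.IndepFun g Y P
  bound₁ : ∀ᵐ ω ∂P, |g ω * Y ω| ≤ L * (1 + |X ω|)
  bound₂ : ∀ᵐ ω ∂P, |X ω| ≤ L * (1 + |g ω * Y ω|)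

open MeasureTheory ProbabilityTheory Filter Topology Set

/-! ### Turning a symmetric atomless law into a Weibull law -/

/-- The two-sided tail `t ↦ μ {x | t < |x|}` of a law on `ℝ`, as a real number. -/
noncomputable def absTail (μ : Measure ℝ) (t : ℝ) : ℝ := μ.real {x | t < |x|}

/-- The odd transport map `x ↦ sign x * (-log (absTail μ |x|)) ^ (1 / p)`. It sends a symmetric
atomless law `μ` with unbounded support to the symmetric Weibull law with exponent `p`. -/
noncomputable def weibullMap (μ : Measure ℝ) (p x : ℝ) : ℝ :=
  SignType.sign x * (-Real.log (absTail μ |x|)) ^ (1 / p)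

lemma measurableSet_lt_abs (t : ℝ) : MeasurableSet {x : ℝ | t < |x|} :=
  measurableSet_lt measurable_const (by fun_prop)

section transport

variable {μ : Measure ℝ}

lemma absTail_nonneg (t : ℝ) : 0 ≤ absTail μ t := measureReal_nonneg

lemma absTail_eq_integral (t : ℝ) :
    absTail μ t = ∫ x, ({x : ℝ | t < |x|}.indicator (fun _ => (1 : ℝ)) x) ∂μ := by
  rw [integral_indicator_const _ (measurableSet_lt_abs t)]
  simp [absTail]

lemma weibullMap_neg (p x : ℝ) : weibullMap μ p (-x) = -weibullMap μ p x := by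
  simp [weibullMap, Left.sign_neg]

variable [IsProbabilityMeasure μ]

lemma absTail_antitone : Antitone (absTail μ) := fun s t hst =>
  measureReal_mono (fun x (hx : t < |x|) => lt_of_le_of_lt hst hx)

lemma absTail_le_one (t : ℝ) : absTail μ t ≤ 1 := measureReal_le_one

/-- Dominated convergence: away from the null set `{|x| = t}` the indicator of `{t < |x|}` is
locally constant in `t`. -/
lemma absTail_continuous (hμ : ∀ x, μ {x} = 0) : Continuous (absTail μ) := by
  rw [continuous_iff_continuousAt]
  intro t
  rw [show absTail μ = _ from funext absTail_eq_integral]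
  refine continuousAt_of_dominated (bound := fun _ => 1) ?_ ?_ (integrable_const _) ?_
  · exact Eventually.of_forall fun s =>
      (measurable_const.indicator (measurableSet_lt_abs s)).aestronglyMeasurable
  · refine Eventually.of_forall fun s => Eventually.of_forall fun x => ?_
    by_cases h : s < |x| <;> simp [indicator, h]
  · have h1 : ∀ᵐ x ∂μ, x ≠ t := by simpa [ae_iff] using hμ t
    have h2 : ∀ᵐ x ∂μ, x ≠ -t := by simpa [ae_iff] using hμ (-t)
    filter_upwards [h1, h2] with x hx1 hx2
    have hne : |x| ≠ t := by
      intro h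
      rcases abs_choice x with h' | h'
      · exact hx1 (by rw [← h, h'])
      · exact hx2 (by rw [← h, h']; simp)
    rcases lt_or_gt_of_ne hne with h | h
    · refine (continuousAt_const (y := (0 : ℝ))).congr ?_
      filter_upwards [lt_mem_nhds h] with s hs
      simp [indicator, not_lt.2 hs.le]
    · refine (continuousAt_const (y := (1 : ℝ))).congr ?_
      filter_upwards [gt_mem_nhds h] with s hs
      simp [indicator, hs]

lemma absTail_tendsto_zero : Tendsto (absTail μ) atTop (𝓝 0) := by
  rw [show absTail μ = _ from funext absTail_eq_integral]
  have : Tendsto (fun t : ℝ => ∫ x, ({x : ℝ | t < |x|}.indicator (fun _ => (1 : ℝ)) x) ∂μ)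
      atTop (𝓝 (∫ _, (0 : ℝ) ∂μ)) := by
    refine tendsto_integral_filter_of_dominated_convergence (fun _ => 1) ?_ ?_
      (integrable_const _) ?_
    · exact Eventually.of_forall fun s =>
        (measurable_const.indicator (measurableSet_lt_abs s)).aestronglyMeasurable
    · refine Eventually.of_forall fun s => Eventually.of_forall fun x => ?_
      by_cases h : s < |x| <;> simp [indicator, h]
    · refine Eventually.of_forall fun x => ?_
      refine tendsto_const_nhds.congr' ?_
      filter_upwards [eventually_ge_atTop |x|] with s hs
      simp [indicator, not_lt.2 hs]
  simpa using this

lemma absTail_zero (hμ : ∀ x, μ {x} = 0) : absTail μ 0 = 1 := by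
  have h : {x : ℝ | 0 < |x|} = {0}ᶜ := by ext x; simp
  rw [absTail, h, probReal_compl_eq_one_sub (measurableSet_singleton 0)]
  simp [Measure.real, hμ]

/-- The variable `absTail μ |x|` is uniform on `[0, 1]` under `μ`. -/
lemma measure_absTail_lt (hμ : ∀ x, μ {x} = 0) {v : ℝ} (hv0 : 0 < v) (hv1 : v ≤ 1) :
    μ {x | absTail μ |x| < v} = ENNReal.ofReal v := by
  have hcont := absTail_continuous hμ
  let K : Set ℝ := {t | 0 ≤ t ∧ v ≤ absTail μ t}
  have hKne : K.Nonempty := ⟨0, le_rfl, by rw [absTail_zero hμ]; exact hv1⟩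
  have hKcl : IsClosed K :=
    (isClosed_le continuous_const continuous_id).inter (isClosed_le continuous_const hcont)
  obtain ⟨M, hM⟩ := (absTail_tendsto_zero (μ := μ) |>.eventually_lt_const hv0).exists
  have hKbdd : BddAbove K := ⟨M, fun t ht => by
    by_contra! h
    exact absurd (ht.2.trans (absTail_antitone h.le)) (not_le.2 hM)⟩
  -- The last point at which the tail is at least `v`; there it equals `v`.
  have ht0 : sSup K ∈ K := hKcl.csSup_mem hKne hKbdd
  set t₀ := sSup K with ht₀
  have hlt : ∀ t, t₀ < t → absTail μ t < v := fun t ht => by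
    by_contra! h
    exact absurd (le_csSup hKbdd (show t ∈ K from ⟨ht0.1.trans ht.le, h⟩)) (not_le.2 ht)
  have heq : absTail μ t₀ = v := by
    refine le_antisymm ?_ ht0.2
    have : Tendsto (absTail μ) (𝓝[>] t₀) (𝓝 (absTail μ t₀)) :=
      hcont.continuousAt.tendsto.mono_left nhdsWithin_le_nhds
    refine le_of_tendsto this ?_
    filter_upwards [self_mem_nhdsWithin] with t ht using (hlt t ht).le
  have hset : {x | absTail μ |x| < v} = {x | t₀ < |x|} := by
    ext x
    refine ⟨fun hx => ?_, fun hx => hlt _ hx⟩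
    by_contra h
    exact absurd (ht0.2.trans (absTail_antitone (not_lt.1 h))) (not_le.2 hx)
  rw [hset, ← heq, absTail, ofReal_measureReal]

lemma weibullMap_measurable (p : ℝ) : Measurable (weibullMap μ p) := by
  have h1 : Measurable (fun x : ℝ => absTail μ |x|) :=
    absTail_antitone.measurable.comp (by fun_prop)
  have h2 : Measurable (fun x : ℝ => ((SignType.sign x : SignType) : ℝ)) := by
    have : (fun x : ℝ => ((SignType.sign x : SignType) : ℝ)) =
        fun x => if 0 < x then 1 else if x < 0 then -1 else 0 := by
      ext x
      rw [sign_apply]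
      split_ifs <;> simp
    rw [this]
    exact Measurable.ite measurableSet_Ioi measurable_const
      (Measurable.ite measurableSet_Iio measurable_const measurable_const)
  exact h2.mul ((Real.measurable_log.comp h1).neg.pow_const _)

lemma neg_log_absTail_nonneg (t : ℝ) : 0 ≤ -Real.log (absTail μ t) := by
  have := Real.log_nonpos (absTail_nonneg (μ := μ) t) (absTail_le_one t)
  linarith

lemma abs_weibullMap (hμ : ∀ x, μ {x} = 0) {p : ℝ} (hp : 0 < p) (x : ℝ) :
    |weibullMap μ p x| = (-Real.log (absTail μ |x|)) ^ (1 / p) := by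
  have h := Real.rpow_nonneg (neg_log_absTail_nonneg (μ := μ) |x|) (1 / p)
  rcases lt_trichotomy x 0 with hx | rfl | hx
  · simp only [weibullMap, sign_neg hx, SignType.coe_neg, SignType.coe_one, neg_mul, one_mul,
      abs_neg]
    exact abs_of_nonneg h
  · have : p⁻¹ ≠ 0 := (inv_pos.2 hp).ne'
    simp [weibullMap, absTail_zero hμ, Real.zero_rpow this]
  · simp only [weibullMap, sign_pos hx, SignType.coe_one, one_mul]
    exact abs_of_nonneg h

lemma abs_weibullMap_rpow (hμ : ∀ x, μ {x} = 0) {p : ℝ} (hp : 0 < p) (x : ℝ) :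
    |weibullMap μ p x| ^ p = -Real.log (absTail μ |x|) := by
  rw [abs_weibullMap hμ hp, ← Real.rpow_mul (neg_log_absTail_nonneg _),
    one_div_mul_cancel hp.ne', Real.rpow_one]

lemma weibullMap_tail (hμ : ∀ x, μ {x} = 0) (hpos : ∀ t, 0 < absTail μ t) {p : ℝ} (hp : 0 < p)
    {t : ℝ} (ht : 0 ≤ t) :
    μ {x | t < |weibullMap μ p x|} = ENNReal.ofReal (Real.exp (-t ^ p)) := by
  have htp : 0 ≤ t ^ p := Real.rpow_nonneg ht p
  rw [← measure_absTail_lt hμ (Real.exp_pos _) (Real.exp_le_one_iff.2 (neg_nonpos.2 htp))]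
  congr 1
  ext x
  simp only [mem_ofPred_eq]
  rw [← Real.rpow_lt_rpow_iff ht (abs_nonneg _) hp, abs_weibullMap_rpow hμ hp,
    ← Real.log_lt_iff_lt_exp (hpos _), lt_neg]

end transport

/-! ### Gaussian tails -/

/-- The standard Gaussian law. -/
noncomputable abbrev stdGauss : Measure ℝ := gaussianReal 0 1

lemma stdGauss_singleton (x : ℝ) : stdGauss {x} = 0 :=
  gaussianReal_absolutelyContinuous 0 one_ne_zero (by simp)

lemma stdGauss_map_neg : stdGauss.map (fun x => -x) = stdGauss := by
  simpa using gaussianReal_map_neg (μ := 0) (v := 1)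

/-- Lower Gaussian tail bound, obtained by bounding the density from below on `(a, a + 1]`. -/
lemma le_absTail_stdGauss {a : ℝ} (ha : 0 ≤ a) :
    (√(2 * Real.pi))⁻¹ * Real.exp (-a ^ 2 - 1) ≤ absTail stdGauss a := by
  have h1 : stdGauss.real (Ioc a (a + 1)) ≤ absTail stdGauss a :=
    measureReal_mono (fun x hx => lt_of_lt_of_le hx.1 (le_abs_self x))
  refine le_trans ?_ h1
  have hI : IntegrableOn (gaussianPDFReal 0 1) (Ioc a (a + 1)) :=
    (integrable_gaussianPDFReal 0 1).integrableOn
  rw [Measure.real, gaussianReal_apply_eq_integral 0 one_ne_zero, ENNReal.toReal_ofReal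
    (setIntegral_nonneg measurableSet_Ioc fun x _ => gaussianPDFReal_nonneg _ _ x)]
  have h2 : ∫ _ in Ioc a (a + 1), (√(2 * Real.pi))⁻¹ * Real.exp (-a ^ 2 - 1)
      ≤ ∫ x in Ioc a (a + 1), gaussianPDFReal 0 1 x := by
    refine setIntegral_mono_on (integrableOn_const (by simp)) hI measurableSet_Ioc ?_
    intro x hx
    simp only [gaussianPDFReal_def, NNReal.coe_one, mul_one, sub_zero]
    gcongr
    nlinarith [hx.1, hx.2, sq_nonneg (a - 1)]
  simpa using h2

/-- Chernoff bound for both half-lines. -/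
lemma absTail_stdGauss_le {a : ℝ} (ha : 0 ≤ a) :
    absTail stdGauss a ≤ 2 * Real.exp (-(a ^ 2 / 2)) := by
  have hpos : stdGauss.real {x | a ≤ x} ≤ Real.exp (-(a ^ 2 / 2)) := by
    have := measure_ge_le_exp_mul_mgf (X := id) (μ := stdGauss) a ha
      (integrable_exp_mul_gaussianReal a)
    rw [mgf_id_gaussianReal, ← Real.exp_add] at this
    refine this.trans (le_of_eq ?_)
    congr 1
    simp
    ring
  have hneg : stdGauss.real {x | x ≤ -a} = stdGauss.real {x | a ≤ x} := by
    conv_lhs => rw [← stdGauss_map_neg]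
    rw [map_measureReal_apply measurable_neg
      (measurableSet_le measurable_id measurable_const : MeasurableSet {x : ℝ | x ≤ -a})]
    congr 1
    ext x
    simp
  have hsub : {x : ℝ | a < |x|} ⊆ {x | a ≤ x} ∪ {x | x ≤ -a} := by
    intro x (hx : a < |x|)
    rcases lt_abs.1 hx with h | h
    · exact Or.inl h.le
    · exact Or.inr (show x ≤ -a by linarith)
  have := (measureReal_mono hsub (μ := stdGauss)).trans (measureReal_union_le _ _)
  rw [hneg] at this
  unfold absTail
  linarith

lemma absTail_stdGauss_pos (t : ℝ) : 0 < absTail stdGauss t :=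
  lt_of_lt_of_le (by positivity) ((le_absTail_stdGauss (abs_nonneg t)).trans
    (absTail_antitone (le_abs_self t)))

/-! ### The product `gY` -/

/-- The transport map carrying the standard Gaussian law to the law of `Y`, the symmetric Weibull
law with exponent `s`. -/
noncomputable abbrev yMap (s : ℝ) : ℝ → ℝ := weibullMap stdGauss s

/-- The product `g * Y` on the space `ℝ × ℝ` with two independent standard Gaussian coordinates:
`g` is the first one and `Y` is a function of the second. -/
noncomputable def prodVar (s : ℝ) (ω : ℝ × ℝ) : ℝ := ω.1 * yMap s ω.2

/-- The law of `g * Y`. -/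
noncomputable def prodLaw (s : ℝ) : Measure ℝ := (stdGauss.prod stdGauss).map (prodVar s)

lemma prodVar_measurable (s : ℝ) : Measurable (prodVar s) :=
  measurable_fst.mul ((weibullMap_measurable s).comp measurable_snd)

instance (s : ℝ) : IsProbabilityMeasure (prodLaw s) :=
  Measure.isProbabilityMeasure_map (prodVar_measurable s).aemeasurable

lemma yMap_tail {s : ℝ} (hs : 0 < s) {t : ℝ} (ht : 0 ≤ t) :
    stdGauss {x | t < |yMap s x|} = ENNReal.ofReal (Real.exp (-t ^ s)) :=
  weibullMap_tail stdGauss_singleton absTail_stdGauss_pos hs ht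

lemma yMap_ne_zero {s : ℝ} (hs : 0 < s) : ∀ᵐ x ∂stdGauss, yMap s x ≠ 0 := by
  have h := yMap_tail hs le_rfl
  rw [Real.zero_rpow hs.ne', neg_zero, Real.exp_zero, ENNReal.ofReal_one] at h
  have hm : MeasurableSet {x | 0 < |yMap s x|} :=
    measurableSet_lt measurable_const (by
      have := weibullMap_measurable (μ := stdGauss) s
      fun_prop)
  have h' : ∀ᵐ x ∂stdGauss, x ∈ {x | 0 < |yMap s x|} :=
    (mem_ae_iff_prob_eq_one hm).2 h
  filter_upwards [h'] with x hx
  exact abs_pos.1 hx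

/-- For almost every value of `Y` one has `Y ≠ 0`, and then `g * Y` is a nondegenerate Gaussian. -/
lemma prodLaw_singleton {s : ℝ} (hs : 0 < s) (c : ℝ) : prodLaw s {c} = 0 := by
  rw [prodLaw, Measure.map_apply (prodVar_measurable s) (measurableSet_singleton c),
    Measure.prod_apply_symm (prodVar_measurable s (measurableSet_singleton c)),
    lintegral_eq_zero_iff (measurable_measure_prodMk_right
      (prodVar_measurable s (measurableSet_singleton c)))]
  filter_upwards [yMap_ne_zero hs] with y hy
  have : ((fun x => (x, y)) ⁻¹' (prodVar s ⁻¹' {c})) ⊆ {c / yMap s y} := by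
    intro x hx
    simp only [mem_preimage, mem_singleton_iff, prodVar] at hx
    simp [← hx, hy]
  exact measure_mono_null this (stdGauss_singleton _)

lemma absTail_prodLaw (s t : ℝ) :
    absTail (prodLaw s) t = (stdGauss.prod stdGauss).real {ω | t < |prodVar s ω|} := by
  rw [absTail, prodLaw, map_measureReal_apply (prodVar_measurable s) (measurableSet_lt_abs t)]
  rfl

/-- If `|g| > a` and `|Y| > b` then `|g * Y| > a * b`. -/
lemma mul_le_absTail_prodLaw {s : ℝ} (hs : 0 < s) {a b : ℝ} (ha : 0 ≤ a) (hb : 0 ≤ b) :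
    absTail stdGauss a * Real.exp (-b ^ s) ≤ absTail (prodLaw s) (a * b) := by
  have h : Real.exp (-b ^ s) = stdGauss.real {x | b < |yMap s x|} := by
    rw [Measure.real, yMap_tail hs hb, ENNReal.toReal_ofReal (Real.exp_nonneg _)]
  rw [h, absTail_prodLaw, absTail, ← measureReal_prod_prod]
  refine measureReal_mono ?_
  rintro ⟨x, y⟩ ⟨hx, hy⟩
  simp only [mem_ofPred_eq, prodVar, abs_mul] at hx hy ⊢
  exact mul_lt_mul'' hx hy ha hb

/-- If `|g * Y| > a * b` then `|g| > a` or `|Y| > b`. -/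
lemma absTail_prodLaw_le {s : ℝ} (hs : 0 < s) {a b : ℝ} (ha : 0 ≤ a) (hb : 0 ≤ b) :
    absTail (prodLaw s) (a * b) ≤ absTail stdGauss a + Real.exp (-b ^ s) := by
  have h : Real.exp (-b ^ s) = stdGauss.real {x | b < |yMap s x|} := by
    rw [Measure.real, yMap_tail hs hb, ENNReal.toReal_ofReal (Real.exp_nonneg _)]
  have h1 : stdGauss.real {x | b < |yMap s x|} =
      (stdGauss.prod stdGauss).real (univ ×ˢ {x | b < |yMap s x|}) := by
    simp [measureReal_prod_prod]
  have h2 : absTail stdGauss a =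
      (stdGauss.prod stdGauss).real ({x | a < |x|} ×ˢ univ) := by
    simp [measureReal_prod_prod, absTail]
  rw [h, h1, h2, absTail_prodLaw]
  refine le_trans (measureReal_mono ?_) (measureReal_union_le _ _)
  rintro ⟨x, y⟩ hxy
  simp only [mem_ofPred_eq, prodVar, abs_mul, mem_union, mem_prod, mem_univ, true_and,
    and_true] at hxy ⊢
  by_contra! hc
  exact absurd (mul_le_mul hc.1 hc.2 (abs_nonneg _) ha) (not_le.2 hxy)

/-! ### Comparison of the tails -/

/-- The optimal splitting `t = a * b` with `a ^ 2 = b ^ s = t ^ r`. -/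
lemma exists_split {r s : ℝ} (hr0 : 0 < r) (hs0 : 0 < s) (hs : 1 / s + 1 / 2 = 1 / r)
    {t : ℝ} (ht : 0 ≤ t) :
    ∃ a b : ℝ, 0 ≤ a ∧ 0 ≤ b ∧ a * b = t ∧ a ^ 2 = t ^ r ∧ b ^ s = t ^ r := by
  refine ⟨t ^ (r / 2), t ^ (r / s), by positivity, by positivity, ?_, ?_, ?_⟩
  · rw [← Real.rpow_add_of_nonneg ht (by positivity) (by positivity)]
    have : r / 2 + r / s = 1 := by
      have : r * (1 / s + 1 / 2) = 1 := by rw [hs]; field_simp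
      rw [← this]; ring
    rw [this, Real.rpow_one]
  · rw [← Real.rpow_natCast, ← Real.rpow_mul ht]
    congr 1
    push_cast
    ring
  · rw [← Real.rpow_mul ht]
    congr 1
    field_simp

lemma le_absTail_prodLaw {r s : ℝ} (hr0 : 0 < r) (hs0 : 0 < s) (hs : 1 / s + 1 / 2 = 1 / r)
    {t : ℝ} (ht : 0 ≤ t) :
    (√(2 * Real.pi))⁻¹ * Real.exp (-(2 * t ^ r + 1)) ≤ absTail (prodLaw s) t := by
  obtain ⟨a, b, ha, hb, hab, ha2, hbs⟩ := exists_split hr0 hs0 hs ht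
  have h1 := mul_le_absTail_prodLaw hs0 ha hb
  have h2 := mul_le_mul_of_nonneg_right (le_absTail_stdGauss ha) (Real.exp_nonneg (-b ^ s))
  rw [hab] at h1
  refine le_trans (le_of_eq ?_) (h2.trans h1)
  rw [mul_assoc, ← Real.exp_add, ha2, hbs]
  congr 2
  ring

lemma absTail_prodLaw_pos {r s : ℝ} (hr0 : 0 < r) (hs0 : 0 < s) (hs : 1 / s + 1 / 2 = 1 / r)
    (t : ℝ) : 0 < absTail (prodLaw s) t :=
  lt_of_lt_of_le (by positivity) ((le_absTail_prodLaw hr0 hs0 hs (abs_nonneg t)).trans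
    (absTail_antitone (le_abs_self t)))

lemma neg_log_absTail_le {r s : ℝ} (hr0 : 0 < r) (hs0 : 0 < s) (hs : 1 / s + 1 / 2 = 1 / r)
    {t : ℝ} (ht : 0 ≤ t) :
    -Real.log (absTail (prodLaw s) t) ≤ 2 * t ^ r + (1 + |Real.log √(2 * Real.pi)|) := by
  have h := Real.log_le_log (by positivity) (le_absTail_prodLaw hr0 hs0 hs ht)
  rw [Real.log_mul (by positivity) (by positivity), Real.log_exp, Real.log_inv] at h
  linarith [le_abs_self (Real.log √(2 * Real.pi))]

lemma rpow_le_neg_log_absTail {r s : ℝ} (hr0 : 0 < r) (hs0 : 0 < s) (hs : 1 / s + 1 / 2 = 1 / r)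
    {t : ℝ} (ht : 0 ≤ t) :
    t ^ r ≤ 2 * -Real.log (absTail (prodLaw s) t) + 2 * Real.log 3 := by
  obtain ⟨a, b, ha, hb, hab, ha2, hbs⟩ := exists_split hr0 hs0 hs ht
  have h1 := absTail_prodLaw_le hs0 ha hb
  have h2 := absTail_stdGauss_le ha
  rw [hab, hbs] at h1
  rw [ha2] at h2
  have h3 : Real.exp (-t ^ r) ≤ Real.exp (-(t ^ r / 2)) :=
    Real.exp_le_exp.2 (by linarith [Real.rpow_nonneg ht r])
  have h4 : absTail (prodLaw s) t ≤ 3 * Real.exp (-(t ^ r / 2)) := by linarith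
  have h5 := Real.log_le_log (absTail_prodLaw_pos hr0 hs0 hs t) h4
  rw [Real.log_mul (by norm_num) (by positivity), Real.log_exp] at h5
  linarith

lemma le_of_rpow_le {r u w A B : ℝ} (hr : 0 < r) (hu : 0 ≤ u) (hw : 0 ≤ w) (hA : 0 ≤ A)
    (hB : 0 ≤ B) (h : u ^ r ≤ A * w ^ r + B) : u ≤ (A + B) ^ (1 / r) * (1 + w) := by
  rw [← Real.rpow_le_rpow_iff hu (by positivity) hr,
    Real.mul_rpow (by positivity) (by positivity), ← Real.rpow_mul (by positivity),
    one_div_mul_cancel hr.ne', Real.rpow_one, add_mul]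
  have h1 : w ^ r ≤ (1 + w) ^ r := Real.rpow_le_rpow hw (by linarith) hr.le
  have h2 : 1 ≤ (1 + w) ^ r := Real.one_le_rpow (by linarith) hr.le
  nlinarith [mul_le_mul_of_nonneg_left h1 hA, mul_le_mul_of_nonneg_left h2 hB]

lemma map_odd_comp {Ω : Type*} [MeasurableSpace Ω] {P : Measure Ω} {f : Ω → ℝ} {T : Ω → Ω}
    (hf : Measurable f) (hT : Measurable T) (hTP : P.map T = P) (hfT : ∀ ω, f (T ω) = -f ω) :
    P.map f = P.map (fun ω => -f ω) := by
  conv_lhs => rw [← hTP]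
  rw [Measure.map_map hf hT]
  congr 1
  ext ω
  exact hfT ω

/-- Lemma 6 of the paper: for `0 < r < 2` and `1/s + 1/2 = 1/r` there exist a constant `L(r)`
and a probability space carrying copies of `X`, `Y`, `g` as above. -/
theorem exists_gaussian_weibull_coupling
    (r s : ℝ) (hr0 : 0 < r) (hr2 : r < 2) (hs : 1 / s + 1 / 2 = 1 / r) :
    ∃ L : ℝ, 0 < L ∧ Nonempty (GaussianWeibullCoupling r s L) := by
  have hs0 : 0 < s := by
    have h : 0 < 1 / s := by
      have := one_div_lt_one_div_of_lt hr0 hr2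
      linarith
    exact one_div_pos.1 h
  set C : ℝ := 1 + |Real.log √(2 * Real.pi)| with hC
  have hC0 : 0 ≤ C := by positivity
  have hlog : 0 ≤ 2 * Real.log 3 := by
    have := Real.log_nonneg (show (1 : ℝ) ≤ 3 by norm_num)
    linarith
  have hY := weibullMap_measurable (μ := stdGauss) s
  have hφ := weibullMap_measurable (μ := prodLaw s) r
  have hν := prodLaw_singleton hs0
  have hX := hφ.comp (prodVar_measurable s)
  have hflip₁ : (stdGauss.prod stdGauss).map (Prod.map (fun x => -x) id) =
      stdGauss.prod stdGauss := by
    rw [← Measure.map_prod_map _ _ (by fun_prop) measurable_id, stdGauss_map_neg, Measure.map_id]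
  have hflip₂ : (stdGauss.prod stdGauss).map (Prod.map id (fun x => -x)) =
      stdGauss.prod stdGauss := by
    rw [← Measure.map_prod_map _ _ measurable_id (by fun_prop), stdGauss_map_neg, Measure.map_id]
  have hpow : ∀ ω, |weibullMap (prodLaw s) r (prodVar s ω)| ^ r =
      -Real.log (absTail (prodLaw s) |prodVar s ω|) := fun ω => abs_weibullMap_rpow hν hr0 _
  have hb₁ : ∀ ω, |prodVar s ω| ≤ (2 + 2 * Real.log 3) ^ (1 / r) *
      (1 + |weibullMap (prodLaw s) r (prodVar s ω)|) := fun ω => by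
    refine le_of_rpow_le hr0 (abs_nonneg _) (abs_nonneg _) (by norm_num) hlog ?_
    rw [hpow]
    exact rpow_le_neg_log_absTail hr0 hs0 hs (abs_nonneg _)
  have hb₂ : ∀ ω, |weibullMap (prodLaw s) r (prodVar s ω)| ≤ (2 + C) ^ (1 / r) *
      (1 + |prodVar s ω|) := fun ω => by
    refine le_of_rpow_le hr0 (abs_nonneg _) (abs_nonneg _) (by norm_num) hC0 ?_
    rw [hpow]
    exact neg_log_absTail_le hr0 hs0 hs (abs_nonneg _)
  refine ⟨max ((2 + 2 * Real.log 3) ^ (1 / r)) ((2 + C) ^ (1 / r)),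
    lt_max_of_lt_right (by positivity), ⟨?_⟩⟩
  exact
    { Ω := ℝ × ℝ
      P := stdGauss.prod stdGauss
      probP := inferInstance
      X := fun ω => weibullMap (prodLaw s) r (prodVar s ω)
      Y := fun ω => yMap s ω.2
      g := fun ω => ω.1
      measX := hX
      measY := hY.comp measurable_snd
      measG := measurable_fst
      symmX := by
        refine map_odd_comp hX (by fun_prop) hflip₁ fun ω => ?_
        rw [← weibullMap_neg]
        simp [prodVar]
      tailX := fun t ht => by
        rw [← weibullMap_tail hν (absTail_prodLaw_pos hr0 hs0 hs) hr0 ht]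
        conv_rhs => rw [prodLaw]
        rw [Measure.map_apply (prodVar_measurable s)
          (measurableSet_lt measurable_const (by fun_prop))]
        rfl
      symmY := map_odd_comp (hY.comp measurable_snd) (by fun_prop) hflip₂
        fun ω => weibullMap_neg _ _
      tailY := fun t ht => by
        rw [← yMap_tail hs0 ht]
        have : {ω : ℝ × ℝ | t < |yMap s ω.2|} = univ ×ˢ {x | t < |yMap s x|} := by
          ext; simp
        rw [this, Measure.prod_prod, measure_univ, one_mul]
      gaussG := measurePreserving_fst.map_eq
      indepGY := indepFun_prod measurable_id hY
      bound₁ := Eventually.of_forall fun ω => (hb₁ ω).trans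
        (mul_le_mul_of_nonneg_right (le_max_left _ _) (by positivity))
      bound₂ := Eventually.of_forall fun ω => (hb₂ ω).trans
        (mul_le_mul_of_nonneg_right (le_max_right _ _) (by positivity)) }
end
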